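/- arXiv:math/0112296 — 2 statements merged into one kernel-verified Lean document; each statement's English description precedes it below -/
import Mathlib

section
/- For every l with 0 ≤ l ≤ a, the volume (with respect to the product Lebesgue measure on ℝ³ × ℝ³) of the set {(A,B) ∈ C × C : dist(A,B) ≤ l} equals (4π/3)·a³l³ − (3π/2)·a²l⁴ + (8/5)·a·l⁵ − l⁶/6. -/
open MeasureTheory Real Set

/-- The cube `[0,a]³` in Euclidean 3-space. -/
def cube (a : ℝ) : Set (EuclideanSpace ℝ (Fin 3)) := {x | ∀ i, x i ∈ Set.Icc 0 a}

/-!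
For independent uniform points of `[0, a]ⁿ` the coordinate differences are independent, and each has
density proportional to `(a - |t|)⁺`. So the volume of the pairs at distance at most `l` is the mass
of the ball of radius `l` under the `n`-fold product of this triangular law. Slicing the ball by its
first coordinate expresses that mass as `2 ∫₀ʳ (a - y) Mₙ(√(r² - y²)) dy` in terms of the mass `Mₙ`
one dimension lower. For `0 ≤ r ≤ a` this recursion maps polynomials in the radius to polynomials,
with Wallis integrals in the coefficients; three applications to the constant `1` give the formula.
-/

section DifferenceLaw

theorem map_sub_prod_restrict {G : Type*} [AddGroup G] [MeasurableSpace G] [MeasurableAdd₂ G]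
    [MeasurableNeg G] (μ : Measure G) [SFinite μ] [μ.IsAddRightInvariant]
    {s t : Set G} (hs : MeasurableSet s) (ht : MeasurableSet t) :
    ((μ.restrict s).prod (μ.restrict t)).map (fun p => p.1 - p.2) =
      μ.withDensity fun v => μ ((v + ·) ⁻¹' s ∩ t) := by
  ext E hE
  have hsub : MeasurableSet ((fun p : G × G => p.1 - p.2) ⁻¹' E) := measurable_sub hE
  have hpairs := hsub.inter (hs.prod ht)
  have hshear := measurePreserving_add_prod μ μ
  rw [Measure.map_apply measurable_sub hE, Measure.prod_restrict, Measure.restrict_apply hsub,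
    ← hshear.measure_preimage hpairs.nullMeasurableSet,
    Measure.prod_apply (hshear.measurable hpairs), withDensity_apply _ hE, ← lintegral_indicator hE]
  refine lintegral_congr fun v => ?_
  by_cases hv : v ∈ E
  · rw [indicator_of_mem hv]
    congr 1
    ext x
    simp [hv]
  · rw [indicator_of_notMem hv]
    convert measure_empty (μ := μ)
    ext x
    simp [hv]

theorem volume_preimage_add_Icc_inter_Icc (a v : ℝ) :
    volume ((v + ·) ⁻¹' Icc 0 a ∩ Icc 0 a) = ENNReal.ofReal (a - |v|) := by
  rw [preimage_const_add_Icc, Icc_inter_Icc, Real.volume_Icc, zero_sub]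
  congr 1
  rcases le_total 0 v with hv | hv
  · rw [abs_of_nonneg hv, max_eq_right (by linarith), min_eq_left (by linarith)]
    ring
  · rw [abs_of_nonpos hv, max_eq_left (by linarith), min_eq_right (by linarith)]

/-- The measure on `ℝ` with triangular density `(a - |t|)⁺`: up to normalization, the law of the
difference of two independent uniform points of `[0, a]`. -/
noncomputable def tentMeasure (a : ℝ) : Measure ℝ :=
  volume.withDensity fun t => ENNReal.ofReal (a - |t|)

theorem map_sub_prod_restrict_Icc (a : ℝ) :
    ((volume.restrict (Icc 0 a)).prod (volume.restrict (Icc 0 a))).map (fun p => p.1 - p.2) =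
      tentMeasure a := by
  simp_rw [map_sub_prod_restrict volume measurableSet_Icc measurableSet_Icc,
    volume_preimage_add_Icc_inter_Icc, tentMeasure]

instance isFiniteMeasure_tentMeasure (a : ℝ) : IsFiniteMeasure (tentMeasure a) := by
  rw [← map_sub_prod_restrict_Icc]
  infer_instance

theorem map_sub_prod_pi {ι G : Type*} [Fintype ι] [MeasurableSpace G] [Sub G] [MeasurableSub₂ G]
    (μ ν : ι → Measure G) [∀ i, IsFiniteMeasure (μ i)] [∀ i, IsFiniteMeasure (ν i)] :
    ((Measure.pi μ).prod (Measure.pi ν)).map (fun p => p.1 - p.2) =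
      Measure.pi fun i => ((μ i).prod (ν i)).map fun p => p.1 - p.2 := by
  have hsub : Measurable fun p : (ι → G) × (ι → G) => p.1 - p.2 := measurable_fst.sub measurable_snd
  rw [← (measurePreserving_arrowProdEquivProdArrow G G ι μ ν).map_eq,
    Measure.map_map hsub (MeasurableEquiv.measurable _),
    ← Measure.pi_map_pi fun _ => measurable_sub.aemeasurable]
  rfl

end DifferenceLaw

section RadialMass

/-- The mass that the `n`-fold product of `μ` gives to the Euclidean ball of radius `|r|`. The ball
lives in `Fin n → ℝ`, whose own norm is the sup norm, and is therefore spelled out. -/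
noncomputable def radialMass (μ : Measure ℝ) (n : ℕ) (r : ℝ) : ℝ :=
  (Measure.pi fun _ : Fin n => μ).real {v | ∑ i, v i ^ 2 ≤ r ^ 2}

theorem measurableSet_sum_sq_le {ι : Type*} [Fintype ι] (c : ℝ) :
    MeasurableSet {v : ι → ℝ | ∑ i, v i ^ 2 ≤ c} :=
  measurableSet_le (by fun_prop) measurable_const

theorem dist_le_iff_sum_sq_sub_le {ι : Type*} [Fintype ι] {x y : EuclideanSpace ℝ ι} {r : ℝ}
    (hr : 0 ≤ r) : dist x y ≤ r ↔ ∑ i, (x i - y i) ^ 2 ≤ r ^ 2 := by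
  simp [EuclideanSpace.dist_eq, Real.dist_eq, sqrt_le_left hr]

theorem volume_pairs_Icc_dist_le (n : ℕ) (a : ℝ) {l : ℝ} (hl : 0 ≤ l) :
    volume {p : EuclideanSpace ℝ (Fin n) × EuclideanSpace ℝ (Fin n) |
        (∀ i, p.1 i ∈ Icc 0 a) ∧ (∀ i, p.2 i ∈ Icc 0 a) ∧ dist p.1 p.2 ≤ l} =
      ENNReal.ofReal (radialMass (tentMeasure a) n l) := by
  let Q : Set (Fin n → ℝ) := univ.pi fun _ => Icc 0 a
  let B : Set (Fin n → ℝ) := {v | ∑ i, v i ^ 2 ≤ l ^ 2}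
  have hQ : MeasurableSet Q := .univ_pi fun _ => measurableSet_Icc
  have hB : MeasurableSet B := measurableSet_sum_sq_le _
  have hsub : Measurable fun p : (Fin n → ℝ) × (Fin n → ℝ) => p.1 - p.2 := measurable_sub
  have hcoord := (PiLp.volume_preserving_ofLp (Fin n)).prod (PiLp.volume_preserving_ofLp (Fin n))
  have hpairs : {p : EuclideanSpace ℝ (Fin n) × EuclideanSpace ℝ (Fin n) |
      (∀ i, p.1 i ∈ Icc 0 a) ∧ (∀ i, p.2 i ∈ Icc 0 a) ∧ dist p.1 p.2 ≤ l} =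
      Prod.map WithLp.ofLp WithLp.ofLp ⁻¹' ((fun p => p.1 - p.2) ⁻¹' B ∩ Q ×ˢ Q) := by
    ext ⟨x, y⟩
    simp only [Q, B, dist_le_iff_sum_sq_sub_le hl, mem_preimage, mem_inter_iff, mem_prod,
      mem_univ_pi, Prod.map_apply, mem_ofPred_eq, Pi.sub_apply]
    tauto
  rw [hpairs, Measure.volume_eq_prod,
    hcoord.measure_preimage ((hsub hB).inter (hQ.prod hQ)).nullMeasurableSet,
    ← Measure.restrict_apply (hsub hB), ← Measure.prod_restrict, ← Measure.map_apply hsub hB,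
    volume_pi, Measure.restrict_pi_pi, map_sub_prod_pi]
  simp_rw [map_sub_prod_restrict_Icc]
  exact (ofReal_measureReal).symm

theorem radialMass_zero (μ : Measure ℝ) (r : ℝ) : radialMass μ 0 r = 1 := by
  simp [radialMass, measureReal_def, sq_nonneg]

theorem measureReal_pi_fin_succ {n : ℕ} {α : Fin (n + 1) → Type*} [∀ i, MeasurableSpace (α i)]
    (μ : ∀ i, Measure (α i)) [∀ i, IsFiniteMeasure (μ i)] {s : Set (∀ i, α i)}
    (hs : MeasurableSet s) :
    (Measure.pi μ).real s =
      ∫ x, (Measure.pi fun i : Fin n => μ i.succ).real {v | Fin.cons x v ∈ s} ∂μ 0 := by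
  have hsplit := (measurePreserving_piFinSuccAbove μ 0).symm
  have hpre := hsplit.measurable hs
  rw [measureReal_def, ← hsplit.measure_preimage hs.nullMeasurableSet, Measure.prod_apply hpre,
    ← integral_toReal (measurable_measure_prodMk_left hpre).aemeasurable
      (.of_forall fun _ => measure_lt_top _ _)]
  refine integral_congr_ae (.of_forall fun x => ?_)
  change (Measure.pi fun i : Fin n => μ (Fin.succAbove 0 i)).real {v | Fin.insertNth 0 x v ∈ s} = _
  simp only [Fin.insertNth_zero]
  rfl

theorem radialMass_succ (μ : Measure ℝ) [IsFiniteMeasure μ] (n : ℕ) {r : ℝ} (hr : 0 ≤ r) :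
    radialMass μ (n + 1) r = ∫ x in Icc (-r) r, radialMass μ n √(r ^ 2 - x ^ 2) ∂μ := by
  rw [radialMass, measureReal_pi_fin_succ _ (measurableSet_sum_sq_le _),
    ← integral_indicator measurableSet_Icc]
  refine integral_congr_ae (.of_forall fun x => ?_)
  simp only [mem_ofPred_eq, Fin.sum_univ_succ, Fin.cons_zero, Fin.cons_succ, ← le_sub_iff_add_le']
  by_cases hx : x ∈ Icc (-r) r
  · rw [indicator_of_mem hx, radialMass, sq_sqrt (sub_nonneg.2 (sq_le_sq' hx.1 hx.2))]
  · have hneg : r ^ 2 - x ^ 2 < 0 :=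
      sub_neg.2 (lt_of_not_ge fun h => hx (abs_le.1 (abs_le_of_sq_le_sq h hr)))
    rw [indicator_of_notMem hx]
    convert measureReal_empty
    exact eq_empty_of_forall_notMem fun v hv =>
      (hneg.trans_le (Finset.sum_nonneg fun i _ => sq_nonneg (v i))).not_ge hv

theorem integral_Icc_neg_comp_abs (f : ℝ → ℝ) {r : ℝ} (hr : 0 ≤ r) :
    ∫ x in Icc (-r) r, f |x| = 2 * ∫ x in 0..r, f x := by
  rw [intervalIntegral.integral_of_le hr, ← Ioi_inter_Iic,
    ← setIntegral_indicator measurableSet_Iic, ← integral_comp_abs,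
    ← integral_indicator measurableSet_Icc]
  simp only [indicator, mem_Icc, mem_Iic, abs_le]

theorem radialMass_tentMeasure_succ (n : ℕ) {a r : ℝ} (hr : r ∈ Icc 0 a) :
    radialMass (tentMeasure a) (n + 1) r =
      2 * ∫ y in 0..r, (a - y) * radialMass (tentMeasure a) n √(r ^ 2 - y ^ 2) := by
  rw [radialMass_succ _ _ hr.1, ← integral_Icc_neg_comp_abs _ hr.1]
  nth_rw 1 [tentMeasure]
  rw [setIntegral_withDensity_eq_setIntegral_toReal_smul (by fun_prop) (by simp) _
    measurableSet_Icc]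
  refine setIntegral_congr_fun measurableSet_Icc fun x hx => ?_
  have habs : |x| ≤ a := (abs_le.2 hx).trans hr.2
  simp only [sq_abs, smul_eq_mul, ENNReal.toReal_ofReal (sub_nonneg.2 habs)]

end RadialMass

section WallisIntegrals

theorem integral_cos_pow_add_two_zero_pi_div_two (n : ℕ) :
    ∫ θ in 0..π / 2, cos θ ^ (n + 2) = (n + 1) / (n + 2) * ∫ θ in 0..π / 2, cos θ ^ n := by
  simp [integral_cos_pow]

theorem integral_sqrt_sq_sub_sq_pow (k : ℕ) {r : ℝ} (hr : 0 ≤ r) :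
    ∫ y in 0..r, √(r ^ 2 - y ^ 2) ^ k = r ^ (k + 1) * ∫ θ in 0..π / 2, cos θ ^ (k + 1) := by
  have hsubst := intervalIntegral.integral_comp_mul_deriv (a := 0) (b := π / 2)
    (g := fun y => √(r ^ 2 - y ^ 2) ^ k) (fun θ _ => (hasDerivAt_sin θ).const_mul r)
    (by fun_prop) (by fun_prop)
  rw [sin_zero, sin_pi_div_two, mul_zero, mul_one] at hsubst
  rw [← hsubst, ← intervalIntegral.integral_const_mul]
  refine intervalIntegral.integral_congr fun θ hθ => ?_
  rw [uIcc_of_le (by positivity)] at hθ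
  have hcos : 0 ≤ cos θ := cos_nonneg_of_mem_Icc ⟨by linarith [hθ.1, pi_pos], hθ.2⟩
  have hsqrt : √(r ^ 2 - (r * sin θ) ^ 2) = r * cos θ := by
    rw [show r ^ 2 - (r * sin θ) ^ 2 = (r * cos θ) ^ 2 by rw [mul_pow, mul_pow, cos_sq']; ring,
      sqrt_sq (mul_nonneg hr hcos)]
  simp only [Function.comp_apply, hsqrt]
  ring

theorem integral_mul_sqrt_sq_sub_sq_pow (k : ℕ) {r : ℝ} (hr : 0 ≤ r) :
    ∫ y in 0..r, y * √(r ^ 2 - y ^ 2) ^ k = r ^ (k + 2) / (k + 2) := by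
  have hderiv : ∀ y ∈ Ioo 0 r, HasDerivAt (fun y => -(√(r ^ 2 - y ^ 2) ^ (k + 2) / (k + 2)))
      (y * √(r ^ 2 - y ^ 2) ^ k) y := by
    intro y hy
    have hpos : 0 < r ^ 2 - y ^ 2 := by nlinarith [hy.1, hy.2]
    have hsqrt := ((hasDerivAt_pow 2 y).const_sub (r ^ 2)).sqrt hpos.ne'
    refine ((hsqrt.pow (k + 2)).div_const (k + 2 : ℝ)).neg.congr_deriv ?_
    have hne := (sqrt_pos.2 hpos).ne'
    field_simp
    push_cast
    ring
  rw [intervalIntegral.integral_eq_sub_of_hasDerivAt_of_le hr (by fun_prop) hderiv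
    (Continuous.intervalIntegrable (by fun_prop) _ _)]
  simp [sqrt_sq hr]

theorem integral_sub_mul_sqrt_sq_sub_sq_pow (k : ℕ) (a : ℝ) {r : ℝ} (hr : 0 ≤ r) :
    ∫ y in 0..r, (a - y) * √(r ^ 2 - y ^ 2) ^ k =
      a * r ^ (k + 1) * (∫ θ in 0..π / 2, cos θ ^ (k + 1)) - r ^ (k + 2) / (k + 2) := by
  simp_rw [sub_mul]
  rw [intervalIntegral.integral_sub (Continuous.intervalIntegrable (by fun_prop) _ _)
    (Continuous.intervalIntegrable (by fun_prop) _ _), intervalIntegral.integral_const_mul,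
    integral_sqrt_sq_sub_sq_pow k hr, integral_mul_sqrt_sq_sub_sq_pow k hr, mul_assoc]

end WallisIntegrals

section RadialMassTentMeasure

variable {a r : ℝ}

theorem radialMass_tentMeasure_succ_of_eq_sum {n m : ℕ} {c : Fin m → ℝ}
    (hc : ∀ ρ ∈ Icc 0 a, radialMass (tentMeasure a) n ρ = ∑ k, c k * ρ ^ (k : ℕ))
    (hr : r ∈ Icc 0 a) :
    radialMass (tentMeasure a) (n + 1) r =
      2 * ∑ k, c k * (a * r ^ (k + 1 : ℕ) * (∫ θ in 0..π / 2, cos θ ^ (k + 1 : ℕ)) -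
        r ^ (k + 2 : ℕ) / (k + 2)) := by
  have hsqrt (y : ℝ) : √(r ^ 2 - y ^ 2) ∈ Icc 0 a :=
    ⟨sqrt_nonneg _, (sqrt_le_left (hr.1.trans hr.2)).2 (by nlinarith [hr.1, hr.2, sq_nonneg y])⟩
  rw [radialMass_tentMeasure_succ n hr]
  simp_rw [hc _ (hsqrt _), Finset.mul_sum, mul_left_comm (a - _)]
  rw [intervalIntegral.integral_finsetSum fun k _ =>
    Continuous.intervalIntegrable (by fun_prop) _ _]
  simp_rw [intervalIntegral.integral_const_mul, integral_sub_mul_sqrt_sq_sub_sq_pow _ a hr.1,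
    ← Finset.mul_sum]

theorem radialMass_tentMeasure_one (hr : r ∈ Icc 0 a) :
    radialMass (tentMeasure a) 1 r = 2 * a * r - r ^ 2 := by
  rw [radialMass_tentMeasure_succ_of_eq_sum (c := ![1]) (by simp [radialMass_zero]) hr]
  simp only [Fin.sum_univ_one, Matrix.cons_val, Fin.val_zero, zero_add, pow_one, integral_cos,
    sin_zero, sin_pi_div_two]
  push_cast
  ring

theorem radialMass_tentMeasure_two (hr : r ∈ Icc 0 a) :
    radialMass (tentMeasure a) 2 r = π * a ^ 2 * r ^ 2 - 8 / 3 * a * r ^ 3 + r ^ 4 / 2 := by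
  have hone : ∀ ρ ∈ Icc 0 a,
      radialMass (tentMeasure a) 1 ρ = ∑ k : Fin 3, ![0, 2 * a, -1] k * ρ ^ (k : ℕ) := by
    intro ρ hρ
    simp only [radialMass_tentMeasure_one hρ, Fin.sum_univ_three, Matrix.cons_val, Fin.val_zero,
      Fin.val_one, Fin.val_two]
    ring
  rw [radialMass_tentMeasure_succ_of_eq_sum hone hr]
  simp only [Fin.sum_univ_three, Matrix.cons_val, Fin.coe_ofNat_eq_mod, Nat.reduceMod,
    Nat.reduceAdd, integral_cos_pow_add_two_zero_pi_div_two, pow_zero, pow_one, integral_cos,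
    sin_zero, sin_pi_div_two, intervalIntegral.integral_const, smul_eq_mul]
  push_cast
  ring

theorem radialMass_tentMeasure_three (hr : r ∈ Icc 0 a) :
    radialMass (tentMeasure a) 3 r =
      4 * π / 3 * a ^ 3 * r ^ 3 - 3 * π / 2 * a ^ 2 * r ^ 4 + 8 / 5 * a * r ^ 5 - r ^ 6 / 6 := by
  have htwo : ∀ ρ ∈ Icc 0 a, radialMass (tentMeasure a) 2 ρ =
      ∑ k : Fin 5, ![0, 0, π * a ^ 2, -(8 / 3 * a), 1 / 2] k * ρ ^ (k : ℕ) := by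
    intro ρ hρ
    simp only [radialMass_tentMeasure_two hρ, Fin.sum_univ_five, Matrix.cons_val,
      Fin.coe_ofNat_eq_mod, Nat.reduceMod]
    ring
  rw [radialMass_tentMeasure_succ_of_eq_sum htwo hr]
  simp only [Fin.sum_univ_five, Matrix.cons_val, Fin.coe_ofNat_eq_mod, Nat.reduceMod,
    Nat.reduceAdd, integral_cos_pow_add_two_zero_pi_div_two, pow_zero, pow_one, integral_cos,
    sin_zero, sin_pi_div_two, intervalIntegral.integral_const, smul_eq_mul]
  push_cast
  ring

end RadialMassTentMeasure

theorem volume_pairs_dist_le (a : ℝ) (ha : 0 < a) (l : ℝ) (hl0 : 0 ≤ l) (hla : l ≤ a) :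
    volume {p : EuclideanSpace ℝ (Fin 3) × EuclideanSpace ℝ (Fin 3) |
        p.1 ∈ cube a ∧ p.2 ∈ cube a ∧ dist p.1 p.2 ≤ l} =
      ENNReal.ofReal
        (4 * π / 3 * a ^ 3 * l ^ 3 - 3 * π / 2 * a ^ 2 * l ^ 4 + 8 / 5 * a * l ^ 5
          - l ^ 6 / 6) := by
  rw [← radialMass_tentMeasure_three ⟨hl0, hla⟩]
  exact volume_pairs_Icc_dist_le 3 a hl0
end

section
/- For all l₁, l₂ with 0 ≤ l₁ ≤ l₂ ≤ a, the volume of {(A,B) ∈ C × C : l₁ ≤ dist(A,B) ≤ l₂} equals a⁶ · ∫_{l₁}^{l₂} P₁(l) dl. That is, on the interval [0,a] the separation of two uniformly random points of C has probability density P₁. -/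
open MeasureTheory Real Set

/-- The density of separations on the range `0 ≤ l ≤ a`. -/
noncomputable def P₁ (a l : ℝ) : ℝ :=
  l ^ 2 * (4 * π * a ^ 3 - 6 * π * a ^ 2 * l + 8 * a * l ^ 2 - l ^ 3) / a ^ 6

/-! The law of the difference `v = B - A` has density `vol (box ∩ (box - v)) = ∏ᵢ (aᵢ - |vᵢ|)⁺`. As
long as `‖v‖` is at most every side, no factor is truncated, and the product expands into the
homogeneous functions `∏_{i ∈ s} |vᵢ|`, one for each set `s` of coordinates. In polar coordinates
the integral of a homogeneous function over a range of norms is a spherical moment times an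
integral of a power of the radius. The spherical moments are found by integrating the same
function against the Gaussian `exp (-‖x‖²)`, once in polar and once in Cartesian coordinates. -/

section Radial

variable {E F : Type*} [NormedAddCommGroup E] [NormedSpace ℝ E] [FiniteDimensional ℝ E]
  [Nontrivial E] [MeasurableSpace E] [BorelSpace E] [NormedAddCommGroup F] [NormedSpace ℝ F]

lemma integral_smul_comp_norm_of_homogeneous (μ : Measure E) [μ.IsAddHaarMeasure] {f : E → ℝ}
    {k : ℕ} (hf : ∀ t : ℝ, 0 < t → ∀ x, f (t • x) = t ^ k * f x) (g : ℝ → F) :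
    ∫ x, f x • g ‖x‖ ∂μ =
      (∫ u, f u ∂μ.toSphere) •
        ∫ t in Ioi (0 : ℝ), t ^ (Module.finrank ℝ E - 1 + k) • g t := by
  calc ∫ x, f x • g ‖x‖ ∂μ
      = ∫ x : ({0}ᶜ : Set E), f x • g ‖(x : E)‖ ∂μ.comap (↑) := by
        rw [integral_subtype_comap (measurableSet_singleton _).compl fun x ↦ f x • g ‖x‖,
          restrict_compl_singleton]
    _ = ∫ z, f z.1 • ((z.2 : ℝ) ^ k • g z.2)
          ∂μ.toSphere.prod (.volumeIoiPow (Module.finrank ℝ E - 1)) := by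
        rw [← μ.measurePreserving_homeomorphUnitSphereProd.integral_comp
          (Homeomorph.measurableEmbedding _)]
        refine integral_congr_ae (.of_forall fun x ↦ ?_)
        have hx : 0 < ‖(x : E)‖ := norm_pos_iff.2 x.2
        have hfx : f x = ‖(x : E)‖ ^ k * f (‖(x : E)‖⁻¹ • (x : E)) := by
          rw [← hf _ hx, smul_inv_smul₀ hx.ne']
        simp [hfx, smul_smul, mul_comm]
    _ = (∫ u, f u ∂μ.toSphere) •
          ∫ t : Ioi (0 : ℝ), (t : ℝ) ^ k • g t ∂.volumeIoiPow (Module.finrank ℝ E - 1) :=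
        integral_prod_smul (fun u : Metric.sphere (0 : E) 1 ↦ f u)
          fun t : Ioi (0 : ℝ) ↦ (t : ℝ) ^ k • g t
    _ = (∫ u, f u ∂μ.toSphere) •
          ∫ t in Ioi (0 : ℝ), t ^ (Module.finrank ℝ E - 1 + k) • g t := by
        congr 1
        simp only [Measure.volumeIoiPow, ENNReal.ofReal]
        rw [integral_withDensity_eq_integral_smul
            (measurable_subtype_coe.pow_const _).real_toNNReal,
          integral_subtype_comap measurableSet_Ioi
            fun t ↦ Real.toNNReal (t ^ (Module.finrank ℝ E - 1)) • t ^ k • g t]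
        refine setIntegral_congr_fun measurableSet_Ioi fun t ht ↦ ?_
        rw [NNReal.smul_def, Real.coe_toNNReal _ (pow_nonneg ht.out.le _), smul_smul, pow_add]

lemma setIntegral_norm_preimage_of_homogeneous (μ : Measure E) [μ.IsAddHaarMeasure] {f : E → ℝ}
    {k : ℕ} (hf : ∀ t : ℝ, 0 < t → ∀ x, f (t • x) = t ^ k * f x) {T : Set ℝ}
    (hT : MeasurableSet T) (h0 : T ⊆ Ici 0) :
    ∫ x in norm ⁻¹' T, f x ∂μ =
      (∫ u, f u ∂μ.toSphere) * ∫ t in T, t ^ (Module.finrank ℝ E - 1 + k) := by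
  have hT0 : (Ioi 0 ∩ T : Set ℝ) =ᵐ[volume] T := by
    rw [← inter_eq_right.2 h0, ← inter_assoc, inter_eq_left.2 Ioi_subset_Ici_self]
    exact (Ioi_ae_eq_Ici (a := 0)).inter (.refl _ _)
  rw [← integral_indicator (measurable_norm hT), ← setIntegral_congr_set hT0,
    ← setIntegral_indicator hT]
  have hnorm (x : E) : (norm ⁻¹' T).indicator f x = f x • T.indicator (1 : ℝ → ℝ) ‖x‖ := by
    by_cases hx : ‖x‖ ∈ T <;> simp [hx]
  have hpow (t : ℝ) : T.indicator (fun t ↦ t ^ (Module.finrank ℝ E - 1 + k)) t =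
      t ^ (Module.finrank ℝ E - 1 + k) • T.indicator (1 : ℝ → ℝ) t := by
    by_cases ht : t ∈ T <;> simp [ht]
  simp_rw [hnorm, hpow]
  exact integral_smul_comp_norm_of_homogeneous μ hf _

end Radial

section Moments

lemma integral_Ioi_pow_mul_exp_neg_sq (k : ℕ) :
    ∫ x in Ioi (0 : ℝ), x ^ k * exp (-x ^ 2) = Gamma ((k + 1) / 2) / 2 := by
  have h := integral_rpow_mul_exp_neg_rpow (p := 2) (q := k) two_pos
    (neg_one_lt_zero.trans_le k.cast_nonneg)
  simp only [rpow_natCast, rpow_two] at h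
  rw [h]
  ring

lemma integral_abs_pow_mul_exp_neg_sq (k : ℕ) :
    ∫ x : ℝ, |x| ^ k * exp (-x ^ 2) = Gamma ((k + 1) / 2) := by
  have h := integral_comp_abs (f := fun x ↦ x ^ k * exp (-x ^ 2))
  simp only [sq_abs] at h
  rw [h, integral_Ioi_pow_mul_exp_neg_sq, mul_div_cancel₀ _ two_ne_zero]

variable {ι : Type*} [Fintype ι]

lemma integral_prod_abs_pow_mul_exp_neg_norm_sq (k : ι → ℕ) :
    ∫ x : EuclideanSpace ℝ ι, (∏ i, |x i| ^ k i) * exp (-‖x‖ ^ 2) =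
      ∏ i, Gamma ((k i + 1) / 2) := by
  rw [← (PiLp.volume_preserving_toLp ι).integral_comp
    (MeasurableEquiv.toLp 2 _).measurableEmbedding]
  simp_rw [EuclideanSpace.real_norm_sq_eq, ← Finset.sum_neg_distrib, exp_sum,
    ← Finset.prod_mul_distrib]
  rw [integral_fintype_prod_volume_eq_prod fun i x ↦ |x| ^ k i * exp (-x ^ 2)]
  simp_rw [integral_abs_pow_mul_exp_neg_sq]

lemma prod_abs_pow_smul (k : ι → ℕ) {t : ℝ} (ht : 0 < t) (x : EuclideanSpace ℝ ι) :
    ∏ i, |(t • x) i| ^ k i = t ^ (∑ i, k i) * ∏ i, |x i| ^ k i := by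
  simp [abs_mul, mul_pow, Finset.prod_mul_distrib, Finset.prod_pow_eq_pow_sum, abs_of_pos ht]

lemma integral_toSphere_prod_abs_pow [Nonempty ι] (k : ι → ℕ) :
    ∫ u : Metric.sphere (0 : EuclideanSpace ℝ ι) 1, ∏ i, |u.1 i| ^ k i ∂volume.toSphere =
      2 * (∏ i, Gamma ((k i + 1) / 2)) / Gamma ((Fintype.card ι + ∑ i, k i) / 2) := by
  have hpolar := integral_smul_comp_norm_of_homogeneous (volume : Measure (EuclideanSpace ℝ ι))
    (f := fun x ↦ ∏ i, |x i| ^ k i) (fun _ ↦ prod_abs_pow_smul k) (fun t ↦ exp (-t ^ 2))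
  have hdim : ((Fintype.card ι - 1 + ∑ i, k i : ℕ) : ℝ) + 1 = Fintype.card ι + ∑ i, k i := by
    push_cast [Nat.cast_sub (Nat.one_le_iff_ne_zero.2 Fintype.card_ne_zero)]
    ring
  have hΓ : 0 < Gamma ((Fintype.card ι + ∑ i, k i) / 2) := Gamma_pos_of_pos (by positivity)
  simp only [smul_eq_mul, integral_prod_abs_pow_mul_exp_neg_norm_sq, finrank_euclideanSpace,
    integral_Ioi_pow_mul_exp_neg_sq, hdim] at hpolar
  rw [eq_div_iff hΓ.ne', hpolar]
  ring

lemma setIntegral_norm_preimage_prod_abs_pow [Nonempty ι] (k : ι → ℕ) {T : Set ℝ}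
    (hT : MeasurableSet T) (h0 : T ⊆ Ici 0) :
    ∫ v : EuclideanSpace ℝ ι in norm ⁻¹' T, ∏ i, |v i| ^ k i =
      2 * (∏ i, Gamma ((k i + 1) / 2)) / Gamma ((Fintype.card ι + ∑ i, k i) / 2) *
        ∫ l in T, l ^ (Fintype.card ι - 1 + ∑ i, k i) := by
  rw [setIntegral_norm_preimage_of_homogeneous (volume : Measure (EuclideanSpace ℝ ι))
      (f := fun v ↦ ∏ i, |v i| ^ k i) (fun _ ↦ prod_abs_pow_smul k) hT h0,
    integral_toSphere_prod_abs_pow, finrank_euclideanSpace]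

lemma setIntegral_norm_preimage_prod_abs [Nonempty ι] [DecidableEq ι] (s : Finset ι) {T : Set ℝ}
    (hT : MeasurableSet T) (h0 : T ⊆ Ici 0) :
    ∫ v : EuclideanSpace ℝ ι in norm ⁻¹' T, ∏ i ∈ s, |v i| =
      2 * √π ^ sᶜ.card / Gamma ((Fintype.card ι + s.card) / 2) *
        ∫ l in T, l ^ (Fintype.card ι - 1 + s.card) := by
  have h := setIntegral_norm_preimage_prod_abs_pow (fun i ↦ if i ∈ s then 1 else 0) hT h0
  have hΓ (i : ι) : Gamma (((if i ∈ s then 1 else 0 : ℕ) + 1) / 2) = if i ∈ s then 1 else √π := by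
    split_ifs <;> norm_num [Gamma_one_half_eq]
  simp_rw [hΓ] at h
  simpa [pow_ite, Finset.prod_ite, Finset.filter_not, Finset.compl_eq_univ_sdiff] using h

end Moments

section Difference

lemma measure_prod_setOf_neg_add_mem {G : Type*} [AddGroup G] [MeasurableSpace G]
    [MeasurableAdd₂ G] [MeasurableNeg G] (μ ν : Measure G) [SFinite μ] [SFinite ν]
    [ν.IsAddLeftInvariant] {S T D : Set G} (hS : MeasurableSet S) (hT : MeasurableSet T)
    (hD : MeasurableSet D) :
    (μ.prod ν) {p | p.1 ∈ S ∧ p.2 ∈ T ∧ -p.1 + p.2 ∈ D} =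
      ∫⁻ v in D, μ {x | x ∈ S ∧ x + v ∈ T} ∂ν := by
  have hmeas : MeasurableSet {p : G × G | p.1 ∈ S ∧ p.2 ∈ T ∧ -p.1 + p.2 ∈ D} :=
    (measurable_fst hS).inter
      ((measurable_snd hT).inter ((measurable_fst.neg.add measurable_snd) hD))
  have hpres := measurePreserving_prod_add_swap ν μ
  rw [← hpres.measure_preimage hmeas.nullMeasurableSet,
    Measure.prod_apply (hpres.measurable hmeas), ← lintegral_indicator hD]
  refine lintegral_congr fun v ↦ ?_
  by_cases hv : v ∈ D <;> simp [hv, preimage, Set.indicator]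

end Difference

section Bounded

lemma integrableOn_of_continuous_of_isBounded {X E : Type*} [PseudoMetricSpace X] [ProperSpace X]
    [MeasurableSpace X] [OpensMeasurableSpace X] [NormedAddCommGroup E] {μ : Measure X}
    [IsLocallyFiniteMeasure μ] {f : X → E} {D : Set X} (hf : Continuous f)
    (hD : Bornology.IsBounded D) : IntegrableOn f D μ :=
  (hf.locallyIntegrable.integrableOn_isCompact hD.isCompact_closure).mono_set subset_closure

lemma isBounded_norm_preimage {E : Type*} [SeminormedAddCommGroup E] {T : Set ℝ}
    (hT : Bornology.IsBounded T) : Bornology.IsBounded (norm ⁻¹' T : Set E) := by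
  obtain ⟨R, hR⟩ := isBounded_iff_forall_norm_le.1 hT
  exact isBounded_iff_forall_norm_le.2 ⟨R, fun x hx ↦ (norm_norm x).symm.trans_le (hR _ hx)⟩

end Bounded

section Box

variable {ι : Type*}

/-- The box `∏ᵢ [0, aᵢ]` in Euclidean space; `cube a` is the three-dimensional case with all
sides equal to `a`. -/
def box (a : ι → ℝ) : Set (EuclideanSpace ℝ ι) := {x | ∀ i, x i ∈ Icc 0 (a i)}

lemma measurableSet_box [Countable ι] (a : ι → ℝ) : MeasurableSet (box a) := by
  simp only [box, ofPred_forall]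
  exact .iInter fun i ↦ measurableSet_Icc.preimage (by fun_prop)

lemma volume_setOf_mem_Icc_and_add_mem_Icc (a c : ℝ) :
    volume {t : ℝ | t ∈ Icc 0 a ∧ t + c ∈ Icc 0 a} = ENNReal.ofReal (a - |c|) := by
  have hset : {t : ℝ | t ∈ Icc 0 a ∧ t + c ∈ Icc 0 a} = Icc (max 0 (-c)) (min a (a - c)) := by
    ext t
    simp only [mem_ofPred_eq, mem_Icc, max_le_iff, le_min_iff, neg_le_iff_add_nonneg,
      le_sub_iff_add_le]
    tauto
  rw [hset, Real.volume_Icc]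
  congr 1
  rcases le_total 0 c with hc | hc
  · simp [hc, abs_of_nonneg]
  · simp [hc, abs_of_nonpos]

variable [Fintype ι]

lemma volume_setOf_mem_box_and_add_mem_box (a : ι → ℝ) (v : EuclideanSpace ℝ ι) :
    volume {x | x ∈ box a ∧ x + v ∈ box a} = ∏ i, ENNReal.ofReal (a i - |v i|) := by
  have hset : WithLp.toLp 2 ⁻¹' {x | x ∈ box a ∧ x + v ∈ box a} =
      univ.pi fun i ↦ {t : ℝ | t ∈ Icc 0 (a i) ∧ t + v i ∈ Icc 0 (a i)} := by
    ext x
    simp only [box, mem_preimage, mem_ofPred_eq, mem_univ_pi, PiLp.add_apply, forall_and]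
  rw [← (PiLp.volume_preserving_toLp ι).measure_preimage_emb
    (MeasurableEquiv.toLp 2 _).measurableEmbedding, hset, volume_pi_pi]
  simp_rw [volume_setOf_mem_Icc_and_add_mem_Icc]

lemma lintegral_prod_ofReal_sub_abs (a : ι → ℝ) {D : Set (EuclideanSpace ℝ ι)}
    (hD : MeasurableSet D) (hb : Bornology.IsBounded D) (hDa : ∀ v ∈ D, ∀ i, |v i| ≤ a i) :
    ∫⁻ v in D, ∏ i, ENNReal.ofReal (a i - |v i|) =
      ENNReal.ofReal (∫ v in D, ∏ i, (a i - |v i|)) := by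
  have hnonneg : ∀ v ∈ D, ∀ i, 0 ≤ a i - |v i| := fun v hv i ↦ sub_nonneg.2 (hDa v hv i)
  rw [ofReal_integral_eq_lintegral_ofReal (integrableOn_of_continuous_of_isBounded (by fun_prop) hb)
    ((ae_restrict_mem hD).mono fun v hv ↦ Finset.prod_nonneg fun i _ ↦ hnonneg v hv i)]
  exact setLIntegral_congr_fun hD fun v hv ↦
    (ENNReal.ofReal_prod_of_nonneg fun i _ ↦ hnonneg v hv i).symm

variable [DecidableEq ι]

/-- The density with respect to `dl`, not normalised by the squared volume of the box, of the
distance `l` between two points of `box a`, valid for `l` at most the smallest side. The term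
indexed by `s` is the integral of `(-1) ^ #s * (∏ i ∈ sᶜ, a i) * ∏ i ∈ s, |v i|` over the sphere
of radius `l`. -/
noncomputable def boxSeparationDensity (a : ι → ℝ) (l : ℝ) : ℝ :=
  ∑ s : Finset ι, (-1) ^ s.card * (∏ i ∈ sᶜ, a i) *
    (2 * √π ^ sᶜ.card / Gamma ((Fintype.card ι + s.card) / 2)) * l ^ (Fintype.card ι - 1 + s.card)

lemma setIntegral_norm_preimage_prod_sub_abs [Nonempty ι] (a : ι → ℝ) {T : Set ℝ}
    (hT : MeasurableSet T) (hb : Bornology.IsBounded T) (h0 : T ⊆ Ici 0) :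
    ∫ v : EuclideanSpace ℝ ι in norm ⁻¹' T, ∏ i, (a i - |v i|) =
      ∫ l in T, boxSeparationDensity a l := by
  simp only [boxSeparationDensity, Finset.prod_sub, Finset.powerset_univ,
    ← Finset.compl_eq_univ_sdiff]
  rw [integral_finsetSum _ fun _ _ ↦
      integrableOn_of_continuous_of_isBounded (by fun_prop) (isBounded_norm_preimage hb),
    integral_finsetSum _ fun _ _ ↦ integrableOn_of_continuous_of_isBounded (by fun_prop) hb]
  refine Finset.sum_congr rfl fun s _ ↦ ?_
  rw [integral_const_mul, integral_const_mul, setIntegral_norm_preimage_prod_abs s hT h0,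
    mul_assoc _ (_ / _)]

theorem density_on_first_range_general [Nonempty ι] (a : ι → ℝ) {T : Set ℝ}
    (hT : MeasurableSet T) (hTa : ∀ l ∈ T, 0 ≤ l ∧ ∀ i, l ≤ a i) :
    volume {p : EuclideanSpace ℝ ι × EuclideanSpace ℝ ι |
        p.1 ∈ box a ∧ p.2 ∈ box a ∧ dist p.1 p.2 ∈ T} =
      ENNReal.ofReal (∫ l in T, boxSeparationDensity a l) := by
  have h0 : T ⊆ Ici 0 := fun l hl ↦ (hTa l hl).1
  have hb : Bornology.IsBounded T := (Metric.isBounded_Icc 0 (a (Classical.arbitrary ι))).subset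
    fun l hl ↦ ⟨h0 hl, (hTa l hl).2 _⟩
  have hD : MeasurableSet (norm ⁻¹' T : Set (EuclideanSpace ℝ ι)) := measurable_norm hT
  calc volume {p : EuclideanSpace ℝ ι × EuclideanSpace ℝ ι |
        p.1 ∈ box a ∧ p.2 ∈ box a ∧ dist p.1 p.2 ∈ T}
      = ∫⁻ v in norm ⁻¹' T, volume {x : EuclideanSpace ℝ ι | x ∈ box a ∧ x + v ∈ box a} := by
        simp only [dist_eq_norm_neg_add]
        exact measure_prod_setOf_neg_add_mem volume volume (measurableSet_box a)
          (measurableSet_box a) hD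
    _ = ∫⁻ v : EuclideanSpace ℝ ι in norm ⁻¹' T, ∏ i, ENNReal.ofReal (a i - |v i|) := by
        simp_rw [volume_setOf_mem_box_and_add_mem_box]
    _ = ENNReal.ofReal (∫ v : EuclideanSpace ℝ ι in norm ⁻¹' T, ∏ i, (a i - |v i|)) :=
        lintegral_prod_ofReal_sub_abs a hD (isBounded_norm_preimage hb) fun v hv i ↦
          (PiLp.norm_apply_le v i).trans ((hTa _ hv).2 i)
    _ = ENNReal.ofReal (∫ l in T, boxSeparationDensity a l) := by
        rw [setIntegral_norm_preimage_prod_sub_abs a hT hb h0]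

lemma boxSeparationDensity_const (a l : ℝ) :
    boxSeparationDensity (fun _ : ι ↦ a) l =
      ∑ k ∈ Finset.range (Fintype.card ι + 1), (Fintype.card ι).choose k *
        ((-1) ^ k * a ^ (Fintype.card ι - k) *
          (2 * √π ^ (Fintype.card ι - k) / Gamma ((Fintype.card ι + k) / 2)) *
          l ^ (Fintype.card ι - 1 + k)) := by
  simp only [boxSeparationDensity, Finset.prod_const, Finset.card_compl, ← Finset.powerset_univ,
    ← nsmul_eq_mul]
  exact Finset.sum_powerset_apply_card (fun k ↦ (-1) ^ k * a ^ (Fintype.card ι - k) *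
    (2 * √π ^ (Fintype.card ι - k) / Gamma ((Fintype.card ι + k) / 2)) *
    l ^ (Fintype.card ι - 1 + k))

end Box

lemma boxSeparationDensity_const_fin_three (a l : ℝ) :
    boxSeparationDensity (fun _ : Fin 3 ↦ a) l =
      l ^ 2 * (4 * π * a ^ 3 - 6 * π * a ^ 2 * l + 8 * a * l ^ 2 - l ^ 3) := by
  have hΓ_three_halves : Gamma (3 / 2) = √π / 2 := by
    rw [show (3 / 2 : ℝ) = 1 / 2 + 1 by norm_num, Gamma_add_one (by norm_num), Gamma_one_half_eq]
    ring
  have hΓ_five_halves : Gamma (5 / 2) = 3 / 4 * √π := by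
    rw [show (5 / 2 : ℝ) = 3 / 2 + 1 by norm_num, Gamma_add_one (by norm_num), hΓ_three_halves]
    ring
  have hΓ_three : Gamma 3 = 2 := by simp [Nat.factorial]
  rw [boxSeparationDensity_const]
  norm_num [Finset.sum_range_succ, hΓ_three_halves, hΓ_five_halves, hΓ_three]
  field_simp
  rw [sq_sqrt pi_pos.le]
  ring

lemma pow_six_mul_P₁ {a : ℝ} (ha : a ≠ 0) (l : ℝ) :
    a ^ 6 * P₁ a l = boxSeparationDensity (fun _ : Fin 3 ↦ a) l := by
  rw [boxSeparationDensity_const_fin_three, P₁, mul_div_cancel₀ _ (pow_ne_zero 6 ha)]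

theorem density_on_first_range (a : ℝ) (ha : 0 < a) (l₁ l₂ : ℝ)
    (h0 : 0 ≤ l₁) (h12 : l₁ ≤ l₂) (h2a : l₂ ≤ a) :
    volume {p : EuclideanSpace ℝ (Fin 3) × EuclideanSpace ℝ (Fin 3) |
        p.1 ∈ cube a ∧ p.2 ∈ cube a ∧ l₁ ≤ dist p.1 p.2 ∧ dist p.1 p.2 ≤ l₂} =
      ENNReal.ofReal (a ^ 6 * ∫ l in l₁..l₂, P₁ a l) := by
  rw [intervalIntegral.integral_of_le h12, ← integral_Icc_eq_integral_Ioc, ← integral_const_mul]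
  simp_rw [pow_six_mul_P₁ ha.ne']
  exact density_on_first_range_general (fun _ : Fin 3 ↦ a) measurableSet_Icc
    fun l hl ↦ ⟨h0.trans hl.1, fun _ ↦ hl.2.trans h2a⟩
end
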